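/- Let R be a commutative semiring with no zero divisors, V a type, and μ : V → V → R a matrix with zero diagonal. Suppose μ has no 2-cycles (for all x, y, μ x y = 0 or μ y x = 0) and no 3-cycles through v (for all x, y with x, y, v pairwise distinct, μ x v · μ v y · μ y x = 0). Then the detour μ↑v has no 2-cycles: for all x, y, (μ↑v) x y · (μ↑v) y x = 0. -/

import Mathlib

/-- The detour of a weighted digraph `μ` (a matrix with zero diagonal over a
commutative semiring) at a vertex `v`. -/
def wdetour {R V : Type*} [CommSemiring R] [DecidableEq V]
    (μ : V → V → R) (v : V) : V → V → R :=
  fun x y => if x = v ∨ y = v ∨ x = y then 0 else μ x y + μ x v * μ v y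

section

variable {R V : Type*} [CommSemiring R] [DecidableEq V] (μ : V → V → R) {v x y : V}

theorem wdetour_eq_zero (h : x = v ∨ y = v ∨ x = y) : wdetour μ v x y = 0 :=
  if_pos h

theorem wdetour_of_ne (hxv : x ≠ v) (hyv : y ≠ v) (hxy : x ≠ y) :
    wdetour μ v x y = μ x y + μ x v * μ v y :=
  if_neg (by simp only [hxv, hyv, hxy, or_self, not_false_eq_true])

theorem wdetour_mul_wdetour_swap (hxv : x ≠ v) (hyv : y ≠ v) (hxy : x ≠ y) :
    wdetour μ v x y * wdetour μ v y x =
      μ x y * μ y x + μ x v * μ v y * μ y x + μ y v * μ v x * μ x y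
        + (μ x v * μ v x) * (μ y v * μ v y) := by
  rw [wdetour_of_ne μ hxv hyv hxy, wdetour_of_ne μ hyv hxv hxy.symm]
  ring

end

theorem detour_no_two_cycles_general {R V : Type*} [CommSemiring R] [DecidableEq V]
    (μ : V → V → R) (v : V)
    (h2 : ∀ x y, x ≠ y → μ x y * μ y x = 0)
    (h3 : ∀ x y, x ≠ y → x ≠ v → y ≠ v → μ x v * μ v y * μ y x = 0) (x y : V) :
    wdetour μ v x y * wdetour μ v y x = 0 := by
  by_cases h : x = v ∨ y = v ∨ x = y
  · rw [wdetour_eq_zero μ h, zero_mul]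
  · obtain ⟨hxv, hyv, hxy⟩ : x ≠ v ∧ y ≠ v ∧ x ≠ y := by simpa only [not_or] using h
    rw [wdetour_mul_wdetour_swap μ hxv hyv hxy, h2 x y hxy, h3 x y hxy hxv hyv,
      h3 y x hxy.symm hyv hxv, h2 x v hxv, zero_mul, add_zero, add_zero, add_zero]

/-- If `μ` (over a commutative semiring with no zero divisors) has no 2-cycles and no
3-cycles through `v`, then the detour `μ↑v` has no 2-cycles. -/
theorem detour_no_two_cycles {R V : Type*} [CommSemiring R] [NoZeroDivisors R]
    [DecidableEq V] (μ : V → V → R) (hdiag : ∀ x, μ x x = 0) (v : V)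
    (h2 : ∀ x y, μ x y = 0 ∨ μ y x = 0)
    (h3 : ∀ x y, x ≠ y → x ≠ v → y ≠ v → μ x v * μ v y * μ y x = 0) :
    ∀ x y, wdetour μ v x y * wdetour μ v y x = 0 :=
  detour_no_two_cycles_general μ v (fun x y _ => mul_eq_zero.mpr (h2 x y)) h3
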